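/- arXiv:2408.16352 — 7 statements merged into one kernel-verified Lean document; each statement's English description precedes it below -/
import Mathlib

section
/- Let C ≠ 0, L ≠ 0, R ≠ 0, h and μ be real numbers and let q̂ : ℝ → ℝ be any function. Define the three-dimensional map Φ_MLC(v, i, φ) = (v − (q̂(φ + h·v) − q̂(φ))/C + (h/C)·i, (1 − R·h/L)·i + (h/L)·(μ − 1)·v, φ + h·v). Then the function Θ_MLC(v, i, φ) = C·v + L·i/R + q̂(φ) + ((1 − μ)/R)·φ is a first integral of Φ_MLC for any step size h, i.e., Θ_MLC(Φ_MLC(v, i, φ)) = Θ_MLC(v, i, φ) for all (v, i, φ) ∈ ℝ³. -/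
/-- For the DT memristor Murali–Lakshmanan–Chua (MLC) circuit map
`Φ_MLC (v, i, φ) = (v − (q̂(φ+h·v) − q̂(φ))/C + (h/C)·i, (1 − R·h/L)·i + (h/L)·(μ−1)·v, φ + h·v)`,
the function `Θ_MLC (v, i, φ) = C·v + L·i/R + q̂(φ) + ((1−μ)/R)·φ` is a first integral. -/
theorem mlc_first_integral (C L R h μ : ℝ) (hC : C ≠ 0) (hL : L ≠ 0) (hR : R ≠ 0)
    (qhat : ℝ → ℝ)
    (Φ : ℝ × ℝ × ℝ → ℝ × ℝ × ℝ)
    (hΦ : ∀ v i φ : ℝ, Φ (v, i, φ) =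
      (v - (qhat (φ + h * v) - qhat φ) / C + (h / C) * i,
       (1 - R * h / L) * i + (h / L) * (μ - 1) * v,
       φ + h * v))
    (Θ : ℝ × ℝ × ℝ → ℝ)
    (hΘ : ∀ v i φ : ℝ, Θ (v, i, φ) = C * v + L * i / R + qhat φ + ((1 - μ) / R) * φ) :
    ∀ v i φ : ℝ, Θ (Φ (v, i, φ)) = Θ (v, i, φ) := by
  intro v i φ
  rw [hΦ, hΘ, hΘ]
  -- The increment of `qhat` cancels between the `v`- and `φ`-terms, so only linear terms
  -- matter and the value at the new flux may be treated as an arbitrary real.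
  generalize qhat (φ + h * v) = q
  field_simp
  ring
end

section
/- Let C ≠ 0, L ≠ 0, R ≠ 0, h and μ be real numbers, q̂ : ℝ → ℝ any function, and Q₀ ∈ ℝ. Suppose (v, i, φ) ∈ ℝ³ satisfies C·v + L·i/R + q̂(φ) + ((1 − μ)/R)·φ = Q₀, and set y = ((μ − 1)·φ − L·i)/R. Then, with (v′, i′, φ′) = Φ_MLC(v, i, φ) and y′ = ((μ − 1)·φ′ − L·i′)/R, one has φ′ = φ + (h/C)·y − (h/C)·q̂(φ) + (h/C)·Q₀ and y′ = (1 − h·R/L)·y + (h/L)·(μ − 1)·φ; i.e., on each invariant manifold the MLC circuit obeys the two-dimensional reduced flux–charge dynamics (φ, y) ↦ (φ + (h/C)·y − (h/C)·q̂(φ) + (h/C)·Q₀, (1 − h·R/L)·y + (h/L)·(μ − 1)·φ). -/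
/-- On each invariant manifold
`M_MLC(Q₀) = {(v, i, φ) : C·v + L·i/R + q̂(φ) + ((1−μ)/R)·φ = Q₀}`, the DT MLC circuit
obeys the two-dimensional reduced flux–charge dynamics
`(φ, y) ↦ (φ + (h/C)·y − (h/C)·q̂(φ) + (h/C)·Q₀, (1 − h·R/L)·y + (h/L)·(μ−1)·φ)`,
where `y = ((μ−1)·φ − L·i)/R`. -/
theorem mlc_reduced_dynamics (C L R h μ : ℝ) (hC : C ≠ 0) (hL : L ≠ 0) (hR : R ≠ 0)
    (qhat : ℝ → ℝ) (Q₀ : ℝ)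
    (Φ : ℝ × ℝ × ℝ → ℝ × ℝ × ℝ)
    (hΦ : ∀ v i φ : ℝ, Φ (v, i, φ) =
      (v - (qhat (φ + h * v) - qhat φ) / C + (h / C) * i,
       (1 - R * h / L) * i + (h / L) * (μ - 1) * v,
       φ + h * v))
    (v i φ : ℝ)
    (hman : C * v + L * i / R + qhat φ + ((1 - μ) / R) * φ = Q₀)
    (y : ℝ) (hy : y = ((μ - 1) * φ - L * i) / R)
    (v' i' φ' : ℝ) (himg : (v', i', φ') = Φ (v, i, φ))
    (y' : ℝ) (hy' : y' = ((μ - 1) * φ' - L * i') / R) :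
    φ' = φ + (h / C) * y - (h / C) * qhat φ + (h / C) * Q₀ ∧
    y' = (1 - h * R / L) * y + (h / L) * (μ - 1) * φ := by
  rw [hΦ] at himg
  obtain ⟨-, rfl, rfl⟩ : _ ∧ i' = _ ∧ φ' = _ := by simpa only [Prod.mk.injEq] using himg
  subst hy hy' hman
  constructor
  -- On the manifold, `C * v = y - qhat φ + Q₀`.
  · field_simp
    ring
  -- The terms in `v` cancel, and both sides equal `y + h * i`.
  · field_simp
    ring
end

section
/- Let C ≠ 0, L ≠ 0, R ≠ 0, h and ν be real numbers and let φ̂ : ℝ → ℝ be any function. Define the three-dimensional map Φ_DMLC(i, v, q) = (i − (φ̂(q + h·i) − φ̂(q))/L + (h/L)·v, (1 − h/(R·C))·v + (h/C)·(ν − 1)·i, q + h·i). Then the function Θ_DMLC(v, i, q) = R·C·v + L·i + φ̂(q) + R·(1 − ν)·q is a first integral of Φ_DMLC for any step size h, i.e., it takes the same value at (i, v, q) and at Φ_DMLC(i, v, q) for all (i, v, q) ∈ ℝ³. -/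
/-- For the DT dual memristor Murali–Lakshmanan–Chua (DMLC) circuit map
`Φ_DMLC (i, v, q) = (i − (φ̂(q+h·i) − φ̂(q))/L + (h/L)·v, (1 − h/(R·C))·v + (h/C)·(ν−1)·i, q + h·i)`,
the function `Θ_DMLC (v, i, q) = R·C·v + L·i + φ̂(q) + R·(1−ν)·q` is a first integral:
it takes the same value at `(i, v, q)` and at `Φ_DMLC (i, v, q)`. -/
theorem dmlc_first_integral (C L R h ν : ℝ) (hC : C ≠ 0) (hL : L ≠ 0) (hR : R ≠ 0)
    (phihat : ℝ → ℝ)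
    (Φ : ℝ × ℝ × ℝ → ℝ × ℝ × ℝ)
    (hΦ : ∀ i v q : ℝ, Φ (i, v, q) =
      (i - (phihat (q + h * i) - phihat q) / L + (h / L) * v,
       (1 - h / (R * C)) * v + (h / C) * (ν - 1) * i,
       q + h * i))
    (Θ : ℝ → ℝ → ℝ → ℝ)
    (hΘ : ∀ v i q : ℝ, Θ v i q = R * C * v + L * i + phihat q + R * (1 - ν) * q) :
    ∀ i v q : ℝ, Θ (Φ (i, v, q)).2.1 (Φ (i, v, q)).1 (Φ (i, v, q)).2.2 = Θ v i q := by
  intro i v q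
  simp only [hΦ, hΘ]
  field_simp
  ring
end

section
/- Let C ≠ 0, L ≠ 0, R ≠ 0, h and ν be real numbers, φ̂ : ℝ → ℝ any function, and Φ₀ ∈ ℝ. Suppose (i, v, q) ∈ ℝ³ satisfies R·C·v + L·i + φ̂(q) + R·(1 − ν)·q = Φ₀, and set y = R·(ν − 1)·q − R·C·v. Then, with (i′, v′, q′) = Φ_DMLC(i, v, q) and y′ = R·(ν − 1)·q′ − R·C·v′, one has q′ = q + (h/L)·y − (h/L)·φ̂(q) + (h/L)·Φ₀ and y′ = (1 − h/(R·C))·y + (h/C)·(ν − 1)·q; i.e., on each invariant manifold the DMLC circuit obeys the two-dimensional reduced flux–charge dynamics (q, y) ↦ (q + (h/L)·y − (h/L)·φ̂(q) + (h/L)·Φ₀, (1 − h/(R·C))·y + (h/C)·(ν − 1)·q). -/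
/-- On each invariant manifold
`M_DMLC(Φ₀) = {(i, v, q) : R·C·v + L·i + φ̂(q) + R·(1−ν)·q = Φ₀}`, the DT DMLC circuit
obeys the two-dimensional reduced flux–charge dynamics
`(q, y) ↦ (q + (h/L)·y − (h/L)·φ̂(q) + (h/L)·Φ₀, (1 − h/(R·C))·y + (h/C)·(ν−1)·q)`,
where `y = R·(ν−1)·q − R·C·v`. -/
theorem dmlc_reduced_dynamics (C L R h ν : ℝ) (hC : C ≠ 0) (hL : L ≠ 0) (hR : R ≠ 0)
    (phihat : ℝ → ℝ) (Φ₀ : ℝ)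
    (Φ : ℝ × ℝ × ℝ → ℝ × ℝ × ℝ)
    (hΦ : ∀ i v q : ℝ, Φ (i, v, q) =
      (i - (phihat (q + h * i) - phihat q) / L + (h / L) * v,
       (1 - h / (R * C)) * v + (h / C) * (ν - 1) * i,
       q + h * i))
    (i v q : ℝ)
    (hman : R * C * v + L * i + phihat q + R * (1 - ν) * q = Φ₀)
    (y : ℝ) (hy : y = R * (ν - 1) * q - R * C * v)
    (i' v' q' : ℝ) (himg : (i', v', q') = Φ (i, v, q))
    (y' : ℝ) (hy' : y' = R * (ν - 1) * q' - R * C * v') :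
    q' = q + (h / L) * y - (h / L) * phihat q + (h / L) * Φ₀ ∧
    y' = (1 - h / (R * C)) * y + (h / C) * (ν - 1) * q := by
  rw [hΦ, Prod.mk.injEq, Prod.mk.injEq] at himg
  obtain ⟨-, rfl, rfl⟩ := himg
  subst hy hy' hman
  -- On the manifold `L·i = Φ₀ - φ̂(q) + y`, which turns `q' = q + h·i` into the first equation.
  -- The `i`-terms of `q'` and `v'` cancel in `y'`, so both sides of the second equation
  -- equal `y + h·v`.
  constructor <;> field_simp <;> ring
end

section
/- Let α ≠ 0 and h be real numbers, F : ℝ → ℝ any function, and I₀ ∈ ℝ. If (y, x) ∈ ℝ² satisfies y/α + F(x) = I₀, then the image (y′, x′) = Ψ(y, x) satisfies y′/α + F(x′) = I₀ (the manifold M(I₀) = {(x, y) : y/α + F(x) = I₀} is invariant) and x′ = x − h·α·F(x) + h·α·I₀ (on the manifold, the dynamics is the one-dimensional reduced map x ↦ x − h·α·F(x) + h·α·I₀). -/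
/-- For the abstract VCD map `Ψ (y, x) = (y − α·(F(x+h·y) − F(x)), x + h·y)`,
each manifold `M(I₀) = {(x, y) : y/α + F(x) = I₀}` is invariant, and on it the dynamics is
the one-dimensional reduced map `x ↦ x − h·α·F(x) + h·α·I₀`. -/
theorem abstract_mc_manifold_invariant_and_reduced_map (α h : ℝ) (hα : α ≠ 0)
    (F : ℝ → ℝ) (I₀ : ℝ)
    (Ψ : ℝ × ℝ → ℝ × ℝ)
    (hΨ : ∀ y x : ℝ, Ψ (y, x) = (y - α * (F (x + h * y) - F x), x + h * y))
    (y x : ℝ) (hman : y / α + F x = I₀)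
    (y' x' : ℝ) (himg : (y', x') = Ψ (y, x)) :
    y' / α + F x' = I₀ ∧ x' = x - h * α * F x + h * α * I₀ := by
  rw [hΨ, Prod.mk.injEq] at himg
  obtain ⟨rfl, rfl⟩ := himg
  subst hman
  constructor
  · field_simp
    ring
  · field_simp
    ring
end

section
/- Let α ≠ 0, β ≠ 0, γ and h be real numbers, F : ℝ → ℝ any function, and I₀ ∈ ℝ. Suppose (w, z, x) ∈ ℝ³ satisfies w/α + z/β − (γ/β)·x + F(x) = I₀, and set y = (γ·x − z)/β. Then, with (w′, z′, x′) = Λ(w, z, x) and y′ = (γ·x′ − z′)/β, one has x′ = x + h·α·y − h·α·F(x) + h·α·I₀ and y′ = y − h·β·y + h·γ·x; i.e., on each invariant manifold M(I₀) = {(w, z, x) : w/α + z/β − (γ/β)·x + F(x) = I₀} the dynamics is the two-dimensional reduced flux–charge map (x, y) ↦ (x + h·α·y − h·α·F(x) + h·α·I₀, y − h·β·y + h·γ·x). -/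
/-- On each invariant manifold
`M(I₀) = {(w, z, x) : w/α + z/β − (γ/β)·x + F(x) = I₀}` of the abstract VCD map `Λ`, the
dynamics is the two-dimensional reduced flux–charge map
`(x, y) ↦ (x + h·α·y − h·α·F(x) + h·α·I₀, y − h·β·y + h·γ·x)`, where `y = (γ·x − z)/β`. -/
theorem abstract_mlc_reduced_dynamics (α β γ h : ℝ) (hα : α ≠ 0) (hβ : β ≠ 0)
    (F : ℝ → ℝ) (I₀ : ℝ)
    (Λ : ℝ × ℝ × ℝ → ℝ × ℝ × ℝ)
    (hΛ : ∀ w z x : ℝ, Λ (w, z, x) =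
      (w - α * (F (x + h * w) - F x) + α * h * z,
       (1 - h * β) * z + h * γ * w,
       x + h * w))
    (w z x : ℝ)
    (hman : w / α + z / β - (γ / β) * x + F x = I₀)
    (y : ℝ) (hy : y = (γ * x - z) / β)
    (w' z' x' : ℝ) (himg : (w', z', x') = Λ (w, z, x))
    (y' : ℝ) (hy' : y' = (γ * x' - z') / β) :
    x' = x + h * α * y - h * α * F x + h * α * I₀ ∧
    y' = y - h * β * y + h * γ * x := by
  rw [hΛ] at himg
  simp only [Prod.mk.injEq] at himg
  obtain ⟨-, hz', hx'⟩ := himg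
  -- On `M(I₀)` the coordinates `w` and `z` are recovered from `(x, y)`.
  have hw : w = α * (I₀ + y - F x) := by
    rw [hy, ← hman]
    field_simp
    ring
  have hz : z = γ * x - β * y := by
    rw [hy]
    field_simp
    ring
  refine ⟨by rw [hx', hw]; ring, ?_⟩
  -- The `w`-terms of `γ * x'` and `z'` cancel, so `y'` depends on `z` and `x` alone.
  rw [hy', hx', hz', div_eq_iff hβ, hz]
  ring
end

section
/- Let a, b ∈ ℝ and set G(x) = x + a·|x|. The three-dimensional map Λ_Lozi(w, z, x) = (w − (G(x + w) − G(x)) + z, b·w, x + w) on ℝ³ admits the first integral Θ(x, w, z) = w + z − b·x + x + a·|x| (i.e., Θ is preserved by Λ_Lozi). Moreover, if (w, z, x) satisfies w + z − b·x + x + a·|x| = 1 and y = b·x − z, then, with (w′, z′, x′) = Λ_Lozi(w, z, x) and y′ = b·x′ − z′, one has x′ = 1 − a·|x| + y and y′ = b·x; that is, on the invariant manifold with index 1 the map Λ_Lozi exactly embeds the Lozi map (x, y) ↦ (1 − a·|x| + y, b·x). -/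
/-- With `G(x) = x + a·|x|`, the map
`Λ_Lozi (w, z, x) = (w − (G(x+w) − G(x)) + z, b·w, x + w)` admits the first integral
`Θ (x, w, z) = w + z − b·x + x + a·|x|`; moreover, on the invariant manifold with index `1`,
setting `y = b·x − z`, the dynamics is exactly the Lozi map `(x, y) ↦ (1 − a·|x| + y, b·x)`. -/
theorem lambda_lozi_first_integral_and_embeds_lozi (a b : ℝ)
    (G : ℝ → ℝ) (hG : ∀ x : ℝ, G x = x + a * |x|)
    (Λ : ℝ × ℝ × ℝ → ℝ × ℝ × ℝ)
    (hΛ : ∀ w z x : ℝ, Λ (w, z, x) = (w - (G (x + w) - G x) + z, b * w, x + w)) :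
    (∀ w z x : ℝ,
      (Λ (w, z, x)).1 + (Λ (w, z, x)).2.1 - b * (Λ (w, z, x)).2.2 +
        (Λ (w, z, x)).2.2 + a * |(Λ (w, z, x)).2.2|
        = w + z - b * x + x + a * |x|) ∧
    (∀ w z x : ℝ, w + z - b * x + x + a * |x| = 1 →
      ∀ y : ℝ, y = b * x - z →
      ∀ w' z' x' : ℝ, (w', z', x') = Λ (w, z, x) →
      ∀ y' : ℝ, y' = b * x' - z' →
      x' = 1 - a * |x| + y ∧ y' = b * x) := by
  refine ⟨fun w z x => ?_, ?_⟩
  · simp only [hΛ, hG]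
    ring
  · intro w z x hΘ y hy w' z' x' h y' hy'
    simp only [hΛ, Prod.mk.injEq] at h
    obtain ⟨-, rfl, rfl⟩ := h
    subst hy hy'
    -- The level-set equation gives `x + w = 1 - a * |x| + (b * x - z)`;
    -- the second equation is `b * (x + w) - b * w = b * x`.
    exact ⟨by linarith, by ring⟩
end
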